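/- For λ∈ba(𝒜) the following are equivalent: (i) λ∈ba₀(𝒜); (ii) |λ|∈ba₀(𝒜); (iii) there exists η>0 such that A∈𝒜 and |λ|(A)>0 imply |λ|(A)>η; (iv) there exists c>0 such that A∈𝒜 and |λ(A)|>0 imply |λ(A)|>c. -/

import Mathlib

open Set Filter Topology

namespace FA

/-- An algebra of subsets of `Ω`. -/
structure SetAlg (Ω : Type*) where
  sets : Set (Set Ω)
  empty_mem : ∅ ∈ sets
  compl_mem : ∀ ⦃A⦄, A ∈ sets → Aᶜ ∈ sets
  union_mem : ∀ ⦃A B⦄, A ∈ sets → B ∈ sets → A ∪ B ∈ sets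

/-- A bounded, finitely additive real-valued set function on the algebra `𝒜`,
i.e. an element of `ba(𝒜)`. -/
structure BAMeasure {Ω : Type*} (𝒜 : SetAlg Ω) where
  toFun : Set Ω → ℝ
  map_empty : toFun ∅ = 0
  additive : ∀ ⦃A B : Set Ω⦄, A ∈ 𝒜.sets → B ∈ 𝒜.sets → Disjoint A B →
      toFun (A ∪ B) = toFun A + toFun B
  bounded : ∃ M : ℝ, ∀ A ∈ 𝒜.sets, |toFun A| ≤ M

variable {Ω : Type*} {𝒜 : SetAlg Ω}

/-- Total variation `|λ|(A) = λ⁺(A) + λ⁻(A)`. -/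
noncomputable def var (lam : BAMeasure 𝒜) (A : Set Ω) : ℝ :=
  sSup {x | ∃ B ∈ 𝒜.sets, B ⊆ A ∧ x = lam.toFun B} +
  sSup {x | ∃ B ∈ 𝒜.sets, B ⊆ A ∧ x = -lam.toFun B}

/-- The outer measure `|λ|*(B) = inf {|λ|(A) : A ∈ 𝒜, B ⊆ A}`. -/
noncomputable def outer (lam : BAMeasure 𝒜) (B : Set Ω) : ℝ :=
  sInf {x | ∃ A ∈ 𝒜.sets, B ⊆ A ∧ x = var lam A}

/-- `𝒜`-simple functions. -/
def IsSimple (𝒜 : SetAlg Ω) (f : Ω → ℝ) : Prop :=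
  (Set.range f).Finite ∧ ∀ r : ℝ, f ⁻¹' {r} ∈ 𝒜.sets

/-- `λ`-convergence: `(f n)` converges to `g` in `λ`-measure. -/
def LConv (lam : BAMeasure 𝒜) (f : ℕ → Ω → ℝ) (g : Ω → ℝ) : Prop :=
  ∀ c > (0:ℝ), Tendsto (fun n => outer lam {ω | c < |f n ω - g ω|}) atTop (𝓝 0)

/-- `λ`-Cauchy sequences. -/
def LCauchy (lam : BAMeasure 𝒜) (f : ℕ → Ω → ℝ) : Prop :=
  ∀ c > (0:ℝ), ∀ ε > (0:ℝ), ∃ N : ℕ, ∀ p q : ℕ,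
    outer lam {ω | c < |f (N + p) ω - f (N + q) ω|} < ε

/-- `L⁰(λ)`: `λ`-limits of sequences of `𝒜`-simple functions. -/
def L0 (lam : BAMeasure 𝒜) : Set (Ω → ℝ) :=
  {f | ∃ s : ℕ → Ω → ℝ, (∀ n, IsSimple 𝒜 (s n)) ∧ LConv lam s f}

/-- The metric of `L⁰(λ)`: `d(f,g) = inf {c + |λ|*(|f-g| ≥ c) : c > 0}`. -/
noncomputable def dL0 (lam : BAMeasure 𝒜) (f g : Ω → ℝ) : ℝ :=
  sInf {x | ∃ c > (0:ℝ), x = c + outer lam {ω | c ≤ |f ω - g ω|}}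

/-- A set `K` is bounded in `L⁰(λ)` if `lim_{c→∞} sup_{f∈K} |λ|*(|f|>c) = 0`. -/
def BddL0 (lam : BAMeasure 𝒜) (K : Set (Ω → ℝ)) : Prop :=
  ∀ ε > (0:ℝ), ∃ c₀ : ℝ, ∀ c ≥ c₀, ∀ f ∈ K, outer lam {ω | c < |f ω|} < ε

/-- The nonnegative elements of `L⁰(λ)`. -/
def L0pos (lam : BAMeasure 𝒜) : Set (Ω → ℝ) := {f ∈ L0 lam | ∀ ω, 0 ≤ f ω}

/-- The elementary integral of a simple function with respect to a set function. -/
noncomputable def simpleIntegral (m : Set Ω → ℝ) (f : Ω → ℝ) : ℝ :=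
  ∑ᶠ r : ℝ, r * m (f ⁻¹' {r})

/-- Dunford–Schwartz integrability: there is a sequence of simple functions converging to `f`
in `λ`-measure which is Cauchy in mean. -/
def MemL1 (lam : BAMeasure 𝒜) (f : Ω → ℝ) : Prop :=
  ∃ s : ℕ → Ω → ℝ, (∀ n, IsSimple 𝒜 (s n)) ∧ LConv lam s f ∧
    ∀ ε > (0:ℝ), ∃ N : ℕ, ∀ m ≥ N, ∀ n ≥ N,
      simpleIntegral (var lam) (fun ω => |s m ω - s n ω|) < ε

/-- `L¹(λ)`. -/
def L1 (lam : BAMeasure 𝒜) : Set (Ω → ℝ) := {f | MemL1 lam f}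

open scoped Classical in
/-- The Dunford–Schwartz integral `∫ f dλ`. -/
noncomputable def integral (lam : BAMeasure 𝒜) (f : Ω → ℝ) : ℝ :=
  if h : MemL1 lam f then
    limUnder atTop (fun n => simpleIntegral lam.toFun (h.choose n))
  else 0

open scoped Classical in
/-- The `L¹(λ)` seminorm `∫ |f| d|λ|`. -/
noncomputable def l1Norm (lam : BAMeasure 𝒜) (f : Ω → ℝ) : ℝ :=
  if h : MemL1 lam f then
    limUnder atTop (fun n => simpleIntegral (var lam) (fun ω => |h.choose n ω|))
  else 0

/-- A set is bounded in `L¹(μ)` if the integrals `∫|f| d|μ|` are uniformly bounded. -/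
def BddL1 (mu : BAMeasure 𝒜) (K : Set (Ω → ℝ)) : Prop :=
  ∃ M : ℝ, ∀ f ∈ K, l1Norm mu f ≤ M

/-- Finitely additive probability measures. -/
def IsFAProb (mu : BAMeasure 𝒜) : Prop :=
  mu.toFun Set.univ = 1 ∧ ∀ A ∈ 𝒜.sets, 0 ≤ mu.toFun A

/-- `μ ∈ 𝔓_*(λ)`: a finitely additive probability with `|μ| ≤ c |λ|` and the same null
sets as `λ`. -/
def PStar (lam mu : BAMeasure 𝒜) : Prop :=
  IsFAProb mu ∧ (∃ c : ℝ, 0 ≤ c ∧ ∀ A ∈ 𝒜.sets, var mu A ≤ c * var lam A) ∧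
  ∀ A ∈ 𝒜.sets, (mu.toFun A = 0 ↔ var lam A = 0)

/-- `μ ∈ 𝔓_*(λ; K)`. -/
def PStarWith (lam : BAMeasure 𝒜) (K : Set (Ω → ℝ)) (mu : BAMeasure 𝒜) : Prop :=
  PStar lam mu ∧ K ⊆ L1 mu ∧ BddL1 mu K

/-- `f` is a `λ`-a.s. lower bound of `K`. -/
def ASLowerBound (lam : BAMeasure 𝒜) (f : Ω → ℝ) (K : Set (Ω → ℝ)) : Prop :=
  ∀ c > (0:ℝ), ∀ k ∈ K, outer lam {ω | k ω < f ω - c} = 0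

/-- Absolute continuity `μ ≪ λ` for bounded finitely additive set functions. -/
def AbsCont (mu lam : BAMeasure 𝒜) : Prop :=
  ∀ ε > (0:ℝ), ∃ δ > (0:ℝ), ∀ A ∈ 𝒜.sets, var lam A < δ → var mu A < ε

/-- `λ ∈ ba₀(𝒜)`: the range of `λ` is finite. -/
def FiniteRange (lam : BAMeasure 𝒜) : Prop := (lam.toFun '' 𝒜.sets).Finite

/-- `μ ∈ ba₀(λ)`. -/
def BA0rel (lam mu : BAMeasure 𝒜) : Prop := FiniteRange mu ∧ AbsCont mu lam

/-- Strong continuity: arbitrarily fine finite partitions. -/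
def StronglyContinuous (lam : BAMeasure 𝒜) : Prop :=
  ∀ ε > (0:ℝ), ∃ (N : ℕ) (A : Fin N → Set Ω), (∀ n, A n ∈ 𝒜.sets) ∧
    Pairwise (Function.onFun Disjoint A) ∧ (⋃ n, A n) = Set.univ ∧
    ∀ n, var lam (A n) < ε

/-- Orthogonality of bounded finitely additive set functions. -/
def Orthogonal (mu nu : BAMeasure 𝒜) : Prop :=
  ∀ ε > (0:ℝ), ∃ A ∈ 𝒜.sets, var mu A < ε ∧ var nu Aᶜ < ε

/-- Strong discontinuity: orthogonal to every strongly continuous element of `ba(𝒜)`. -/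
def StronglyDiscontinuous (mu : BAMeasure 𝒜) : Prop :=
  ∀ nu : BAMeasure 𝒜, StronglyContinuous nu → Orthogonal mu nu

/-- Countable additivity of `λ` on the algebra `𝒜`. -/
def CountablyAdditive (lam : BAMeasure 𝒜) : Prop :=
  ∀ A : ℕ → Set Ω, (∀ n, A n ∈ 𝒜.sets) → Pairwise (Function.onFun Disjoint A) →
    (⋃ n, A n) ∈ 𝒜.sets → HasSum (fun n => lam.toFun (A n)) (lam.toFun (⋃ n, A n))

/-- `𝒜` is a σ-algebra. -/
def IsSigmaAlg (𝒜 : SetAlg Ω) : Prop :=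
  ∀ A : ℕ → Set Ω, (∀ n, A n ∈ 𝒜.sets) → (⋃ n, A n) ∈ 𝒜.sets

/-- Linearity of a functional on `L⁰(λ)`. -/
def LinearOnL0 (lam : BAMeasure 𝒜) (φ : (Ω → ℝ) → ℝ) : Prop :=
  (∀ f ∈ L0 lam, ∀ g ∈ L0 lam, φ (f + g) = φ f + φ g) ∧
  (∀ a : ℝ, ∀ f ∈ L0 lam, φ (a • f) = a * φ f)

/-- Continuity of a functional on `L⁰(λ)` with respect to the metric `d`. -/
def ContinuousOnL0 (lam : BAMeasure 𝒜) (φ : (Ω → ℝ) → ℝ) : Prop :=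
  ∀ f ∈ L0 lam, ∀ ε > (0:ℝ), ∃ δ > (0:ℝ), ∀ g ∈ L0 lam, dL0 lam g f < δ → |φ g - φ f| < ε


/-- Positive-part supremum. -/
noncomputable def psup (𝒜 : SetAlg Ω) (m : Set Ω → ℝ) (A : Set Ω) : ℝ :=
  sSup {x | ∃ B ∈ 𝒜.sets, B ⊆ A ∧ x = m B}

lemma le_psup {m : Set Ω → ℝ} (hb : ∃ M : ℝ, ∀ A ∈ 𝒜.sets, |m A| ≤ M) {A B : Set Ω}
    (hB : B ∈ 𝒜.sets) (h : B ⊆ A) : m B ≤ psup 𝒜 m A := by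
  obtain ⟨M, hM⟩ := hb
  refine le_csSup ⟨M, ?_⟩ ⟨B, hB, h, rfl⟩
  rintro x ⟨C, hC, -, rfl⟩
  exact (le_abs_self _).trans (hM C hC)

lemma psup_le {m : Set Ω → ℝ} {A : Set Ω} {t : ℝ}
    (h : ∀ B ∈ 𝒜.sets, B ⊆ A → m B ≤ t) : psup 𝒜 m A ≤ t := by
  refine csSup_le ⟨m ∅, ∅, 𝒜.empty_mem, empty_subset _, rfl⟩ ?_
  rintro x ⟨C, hC, hCA, rfl⟩
  exact h C hC hCA

lemma psup_superadd {m : Set Ω → ℝ} (hb : ∃ M : ℝ, ∀ A ∈ 𝒜.sets, |m A| ≤ M)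
    (hadd : ∀ ⦃A B : Set Ω⦄, A ∈ 𝒜.sets → B ∈ 𝒜.sets → Disjoint A B → m (A ∪ B) = m A + m B)
    {A B C : Set Ω} (hBA : B ⊆ A) (hCA : C ⊆ A) (hd : Disjoint B C) :
    psup 𝒜 m B + psup 𝒜 m C ≤ psup 𝒜 m A := by
  rw [← le_sub_iff_add_le]
  refine psup_le fun B' hB' hBB => ?_
  rw [le_sub_comm]
  refine psup_le fun C' hC' hCC => ?_
  have h1 := hadd hB' hC' (hd.mono hBB hCC)
  have h2 := le_psup hb (𝒜.union_mem hB' hC') (union_subset (hBB.trans hBA) (hCC.trans hCA))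
  linarith

lemma var_eq (lam : BAMeasure 𝒜) (A : Set Ω) :
    var lam A = psup 𝒜 lam.toFun A + psup 𝒜 (fun B => -lam.toFun B) A := rfl

lemma neg_bdd (lam : BAMeasure 𝒜) : ∃ M : ℝ, ∀ A ∈ 𝒜.sets, |(fun B => -lam.toFun B) A| ≤ M := by
  simpa using lam.bounded

lemma var_superadd (lam : BAMeasure 𝒜) {A B C : Set Ω} (hBA : B ⊆ A) (hCA : C ⊆ A)
    (hd : Disjoint B C) : var lam B + var lam C ≤ var lam A := by
  have h1 := psup_superadd lam.bounded lam.additive hBA hCA hd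
  have h2 := psup_superadd (neg_bdd lam)
    (fun A B hA hB h => by simp only [lam.additive hA hB h]; ring) hBA hCA hd
  simp only [var_eq]
  linarith

lemma abs_le_var (lam : BAMeasure 𝒜) {A B : Set Ω} (hB : B ∈ 𝒜.sets) (h : B ⊆ A) :
    |lam.toFun B| ≤ var lam A := by
  have h1 := le_psup lam.bounded hB h
  have h2 := le_psup (neg_bdd lam) hB h
  have h3 := le_psup lam.bounded 𝒜.empty_mem (empty_subset A)
  have h4 := le_psup (neg_bdd lam) 𝒜.empty_mem (empty_subset A)
  simp only [lam.map_empty, neg_zero] at h2 h3 h4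
  rw [var_eq, abs_le]
  constructor <;> linarith

lemma var_nonneg (lam : BAMeasure 𝒜) (A : Set Ω) : 0 ≤ var lam A :=
  (abs_nonneg _).trans (abs_le_var lam 𝒜.empty_mem (empty_subset A))

lemma diff_mem {A B : Set Ω} (hA : A ∈ 𝒜.sets) (hB : B ∈ 𝒜.sets) : A \ B ∈ 𝒜.sets := by
  have : A \ B = (Aᶜ ∪ B)ᶜ := by ext; simp
  rw [this]
  exact 𝒜.compl_mem (𝒜.union_mem (𝒜.compl_mem hA) hB)

lemma inter_mem {A B : Set Ω} (hA : A ∈ 𝒜.sets) (hB : B ∈ 𝒜.sets) : A ∩ B ∈ 𝒜.sets := by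
  have : A ∩ B = (Aᶜ ∪ Bᶜ)ᶜ := by ext; simp
  rw [this]
  exact 𝒜.compl_mem (𝒜.union_mem (𝒜.compl_mem hA) (𝒜.compl_mem hB))

lemma finite_below (lam : BAMeasure 𝒜) {η : ℝ}
    (h : ∀ A ∈ 𝒜.sets, 0 < var lam A → η < var lam A) (n : ℕ) :
    ∀ A ∈ 𝒜.sets, var lam A ≤ n * η → (lam.toFun '' {B | B ∈ 𝒜.sets ∧ B ⊆ A}).Finite := by
  induction n with
  | zero =>
    intro A hA hv
    refine (finite_singleton (0:ℝ)).subset ?_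
    rintro _ ⟨B, ⟨hB, hBA⟩, rfl⟩
    have := abs_le_var lam hB hBA
    simp only [Nat.cast_zero, zero_mul] at hv
    exact abs_nonpos_iff.1 (this.trans hv)
  | succ n ih =>
    intro A hA hv
    push_cast at hv
    by_cases hs : ∃ B ∈ 𝒜.sets, B ⊆ A ∧ 0 < var lam B ∧ 0 < var lam (A \ B)
    · obtain ⟨B, hB, hBA, h1, h2⟩ := hs
      have hD := diff_mem hA hB
      have h3 := var_superadd lam hBA sdiff_subset (C := A \ B) disjoint_sdiff_right
      have h4 := h B hB h1
      have h5 := h _ hD h2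
      refine (Set.Finite.image2 (fun x y : ℝ => x + y) (ih B hB (by linarith))
        (ih _ hD (by linarith))).subset ?_
      rintro _ ⟨C, ⟨hC, hCA⟩, rfl⟩
      refine ⟨_, ⟨C ∩ B, ⟨inter_mem hC hB, inter_subset_right⟩, rfl⟩,
        _, ⟨C \ B, ⟨diff_mem hC hB, diff_subset_diff_left hCA⟩, rfl⟩, ?_⟩
      have := lam.additive (inter_mem hC hB) (diff_mem hC hB)
        (disjoint_sdiff_right.mono_left inter_subset_right)
      rw [inter_union_diff] at this
      exact this.symm
    · push Not at hs
      refine ((finite_singleton (lam.toFun A)).insert 0).subset ?_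
      rintro _ ⟨C, ⟨hC, hCA⟩, rfl⟩
      rcases (var_nonneg lam C).eq_or_lt with h0 | h0
      · left
        exact abs_nonpos_iff.1 ((abs_le_var lam hC Subset.rfl).trans h0.symm.le)
      · right
        have h1 := hs C hC hCA h0
        have hD := diff_mem hA hC
        have h2 := abs_nonpos_iff.1 ((abs_le_var lam hD Subset.rfl).trans h1)
        have h3 := lam.additive hC hD disjoint_sdiff_right
        rw [union_sdiff_cancel hCA, h2, add_zero] at h3
        exact h3.symm

lemma gap_of_finite {F : Set ℝ} (hF : F.Finite) :
    ∃ c > (0:ℝ), ∀ x ∈ F, 0 < x → c < x := by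
  have h1 : (F ∩ Ioi 0).Finite := hF.inter_of_left _
  rcases (F ∩ Ioi 0).eq_empty_or_nonempty with h | h
  · refine ⟨1, one_pos, fun x hx h0 => ?_⟩
    have : x ∈ F ∩ Ioi 0 := ⟨hx, h0⟩
    simp [h] at this
  · obtain ⟨a, ha, hm⟩ := exists_min_image _ id h1 h
    have ha0 : 0 < a := ha.2
    refine ⟨a / 2, by linarith, fun x hx h0 => ?_⟩
    have : a ≤ x := hm x ⟨hx, h0⟩
    linarith

/-- Lemma 1: for `λ ∈ ba(𝒜)` the following are equivalent: (i) `λ ∈ ba₀(𝒜)`;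
(ii) `|λ| ∈ ba₀(𝒜)`; (iii) there is `η > 0` with `|λ|(A) > 0 → |λ|(A) > η` for `A ∈ 𝒜`;
(iv) there is `c > 0` with `|λ(A)| > 0 → |λ(A)| > c` for `A ∈ 𝒜`. -/
theorem stmt_0 {Ω : Type*} {𝒜 : SetAlg Ω} (lam : BAMeasure 𝒜) :
    List.TFAE [
      FiniteRange lam,
      ((fun A => var lam A) '' 𝒜.sets).Finite,
      ∃ η > (0:ℝ), ∀ A ∈ 𝒜.sets, 0 < var lam A → η < var lam A,
      ∃ c > (0:ℝ), ∀ A ∈ 𝒜.sets, 0 < |lam.toFun A| → c < |lam.toFun A|] := by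
  tfae_have 1 → 4 := by
    intro h
    obtain ⟨c, hc, hh⟩ := gap_of_finite (Set.Finite.image (fun x : ℝ => |x|) h)
    exact ⟨c, hc, fun A hA => hh _ ⟨_, ⟨A, hA, rfl⟩, rfl⟩⟩
  tfae_have 4 → 3 := by
    rintro ⟨c, hc, h⟩
    refine ⟨c, hc, fun A hA h0 => ?_⟩
    by_contra hcon
    have hz : ∀ B ∈ 𝒜.sets, B ⊆ A → lam.toFun B = 0 := by
      intro B hB hBA
      by_contra hne
      exact hcon ((h B hB (abs_pos.2 hne)).trans_le (abs_le_var lam hB hBA))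
    have h1 : psup 𝒜 lam.toFun A ≤ 0 := psup_le fun B hB hBA => (hz B hB hBA).le
    have h2 : psup 𝒜 (fun B => -lam.toFun B) A ≤ 0 :=
      psup_le fun B hB hBA => by simp [hz B hB hBA]
    rw [var_eq] at h0
    linarith
  tfae_have 3 → 1 := by
    rintro ⟨η, hη, h⟩
    have hu : (univ : Set Ω) ∈ 𝒜.sets := by
      simpa using 𝒜.compl_mem 𝒜.empty_mem
    obtain ⟨n, hn⟩ := exists_nat_ge (var lam univ / η)
    refine (finite_below lam h n univ hu ((div_le_iff₀ hη).1 hn)).subset ?_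
    rintro _ ⟨B, hB, rfl⟩
    exact ⟨B, ⟨hB, subset_univ _⟩, rfl⟩
  tfae_have 1 → 2 := by
    intro h
    have h' : ((fun x : ℝ => -x) '' (lam.toFun '' 𝒜.sets)).Finite := Set.Finite.image _ h
    refine (Set.Finite.image2 (fun S T : Set ℝ => sSup S + sSup T)
      h.finite_subsets h'.finite_subsets).subset ?_
    rintro _ ⟨A, hA, rfl⟩
    refine ⟨{x | ∃ B ∈ 𝒜.sets, B ⊆ A ∧ x = lam.toFun B}, ?_,
      {x | ∃ B ∈ 𝒜.sets, B ⊆ A ∧ x = -lam.toFun B}, ?_, rfl⟩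
    · rintro x ⟨B, hB, -, rfl⟩
      exact ⟨B, hB, rfl⟩
    · rintro x ⟨B, hB, -, rfl⟩
      exact ⟨_, ⟨B, hB, rfl⟩, rfl⟩
  tfae_have 2 → 3 := by
    intro h
    obtain ⟨c, hc, hh⟩ := gap_of_finite h
    exact ⟨c, hc, fun A hA => hh _ ⟨A, hA, rfl⟩⟩
  tfae_finish

end FA
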